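/- arXiv:2302.03281 — 7 statements merged into one kernel-verified Lean document; each statement's English description precedes it below -/
import Mathlib

section
/- Let f : (Fin m → ℝ) → ℝ, h : Fin n → ℝ, W : Matrix (Fin m) (Fin n) ℝ, i : Fin m, j : Fin n. Define the weight slice ψ : ℝ → ℝ by ψ t = f ((W.updateRow i (Function.update (W i) j t)).mulVec h). Suppose f is three times continuously differentiable and iteratedDeriv 3 ψ is identically zero. Then f ((W.updateRow i (Function.update (W i) j 0)).mulVec h) - f (W.mulVec h) = -((fderiv ℝ f (W.mulVec h)) (Pi.single i 1)) * (h j) * (W i j) + (1/2) * ((fderiv ℝ (fun x => (fderiv ℝ f x) (Pi.single i 1)) (W.mulVec h)) (Pi.single i 1)) * (h j)^2 * (W i j)^2. -/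
theorem weight_utility_linear_layer (m n : ℕ) (f : (Fin m → ℝ) → ℝ) (h : Fin n → ℝ)
    (W : Matrix (Fin m) (Fin n) ℝ) (i : Fin m) (j : Fin n)
    (hf : ContDiff ℝ 3 f)
    (h3 : ∀ t : ℝ, iteratedDeriv 3
      (fun t : ℝ => f ((W.updateRow i (Function.update (W i) j t)).mulVec h)) t = 0) :
    f ((W.updateRow i (Function.update (W i) j 0)).mulVec h) - f (W.mulVec h) =
      -((fderiv ℝ f (W.mulVec h)) (Pi.single i 1)) * (h j) * (W i j)
        + (1/2) * ((fderiv ℝ (fun x => (fderiv ℝ f x) (Pi.single i 1)) (W.mulVec h))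
            (Pi.single i 1)) * (h j)^2 * (W i j)^2 := by
  set e : Fin m → ℝ := Pi.single i 1 with he
  have hγ : ∀ t : ℝ, (W.updateRow i (Function.update (W i) j t)).mulVec h
      = W.mulVec h + ((t - W i j) * h j) • e := by
    intro t
    have hu : Function.update (W i) j t = W i + Pi.single j (t - W i j) := by
      ext k
      by_cases hk : k = j
      · subst hk; simp
      · simp [hk]
    ext k
    by_cases hk : k = i
    · subst hk
      simp only [Matrix.mulVec, Matrix.updateRow_self, hu, he, Pi.add_apply, Pi.smul_apply,
        Pi.single_eq_same, smul_eq_mul, mul_one]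
      change dotProduct (W k + Pi.single j (t - W k j)) h = dotProduct (W k) h + _
      rw [add_dotProduct, single_dotProduct]
    · simp [Matrix.mulVec, Matrix.updateRow_ne hk, he, hk]
  simp only [hγ] at h3 ⊢
  set γ : ℝ → (Fin m → ℝ) := fun t => W.mulVec h + ((t - W i j) * h j) • e with hγd
  have hγ' : ∀ t, HasDerivAt γ (h j • e) t := by
    intro t
    have := ((((hasDerivAt_id t).sub_const (W i j)).mul_const (h j)).smul_const e).const_add
      (W.mulVec h)
    rw [one_mul] at this
    exact this
  have key : ∀ g : (Fin m → ℝ) → ℝ, Differentiable ℝ g → ∀ t,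
      HasDerivAt (fun t => g (γ t)) (fderiv ℝ g (γ t) e * h j) t := by
    intro g hg t
    have := (hg (γ t)).hasFDerivAt.comp_hasDerivAt t (hγ' t)
    simpa [mul_comm, Function.comp_def] using this
  set g1 : (Fin m → ℝ) → ℝ := fun x => fderiv ℝ f x e with hg1
  have c1 : ContDiff ℝ 2 g1 := (hf.fderiv_right (by norm_num)).clm_apply contDiff_const
  set g2 : (Fin m → ℝ) → ℝ := fun x => fderiv ℝ g1 x e with hg2
  have c2 : ContDiff ℝ 1 g2 := (c1.fderiv_right (by norm_num)).clm_apply contDiff_const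
  have k0 : ∀ t, HasDerivAt (fun t => f (γ t)) (g1 (γ t) * h j) t :=
    key f (hf.differentiable (by norm_num))
  have k1 : ∀ t, HasDerivAt (fun t => g1 (γ t) * h j) (g2 (γ t) * h j * h j) t :=
    fun t => (key g1 (c1.differentiable (by norm_num)) t).mul_const _
  have d0 : deriv (fun t => f (γ t)) = fun t => g1 (γ t) * h j := funext fun t => (k0 t).deriv
  have d1 : deriv (fun t => g1 (γ t) * h j) = fun t => g2 (γ t) * h j * h j :=
    funext fun t => (k1 t).deriv
  have k2 : ∀ t, HasDerivAt (fun t => g2 (γ t) * h j * h j) 0 t := by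
    intro t
    have a := ((key g2 (c2.differentiable (by norm_num)) t).mul_const (h j)).mul_const (h j)
    have b : deriv (fun t => g2 (γ t) * h j * h j) t = 0 := by
      have := h3 t
      change iteratedDeriv 3 (fun t => f (γ t)) t = 0 at this
      rw [iteratedDeriv_succ', iteratedDeriv_succ', iteratedDeriv_one, d0, d1] at this
      exact this
    rw [← b]
    exact a.differentiableAt.hasDerivAt
  have kG : ∀ t, HasDerivAt (fun t => f (γ t) - g1 (γ t) * h j * t
      + (g2 (γ t) * h j * h j) * (t ^ 2 / 2)) 0 t := by
    intro t
    have := ((k0 t).sub ((k1 t).mul (hasDerivAt_id t))).add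
      ((k2 t).mul (((hasDerivAt_id t).pow 2).div_const 2))
    refine this.congr_deriv ?_
    simp
    try ring
  have hc := is_const_of_deriv_eq_zero (fun t => (kG t).differentiableAt)
    (fun t => (kG t).deriv) 0 (W i j)
  have hw : γ (W i j) = W.mulVec h := by simp [hγd]
  simp only [hw] at hc
  change f (γ 0) - _ = -(g1 (W.mulVec h)) * h j * W i j
    + 1 / 2 * g2 (W.mulVec h) * h j ^ 2 * W i j ^ 2
  linear_combination hc
end

section
/- Let f : (Fin m → ℝ) → ℝ be differentiable, σ : ℝ → ℝ be differentiable, and W : Matrix (Fin m) (Fin n) ℝ. Define g : (Fin n → ℝ) → ℝ by g a = f (W.mulVec (fun i => σ (a i))). Then for every a : Fin n → ℝ and i : Fin n, deriv (fun t => g (Function.update a i t)) (a i) = ∑ k : Fin m, ((fderiv ℝ f (W.mulVec (fun i' => σ (a i')))) (Pi.single k 1)) * (W k i) * (deriv σ (a i)). -/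
theorem backprop_activation_input (m n : ℕ) (f : (Fin m → ℝ) → ℝ) (σ : ℝ → ℝ)
    (hf : Differentiable ℝ f) (hσ : Differentiable ℝ σ)
    (W : Matrix (Fin m) (Fin n) ℝ) :
    ∀ (a : Fin n → ℝ) (i : Fin n),
      deriv (fun t : ℝ => f (W.mulVec (fun i' => σ (Function.update a i t i')))) (a i) =
        ∑ k : Fin m, ((fderiv ℝ f (W.mulVec (fun i' => σ (a i')))) (Pi.single k 1))
          * (W k i) * (deriv σ (a i)) := by
  intro a i
  have h1 : HasDerivAt (fun t : ℝ => W.mulVec (fun i' => σ (Function.update a i t i')))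
      (fun k => W k i * deriv σ (a i)) (a i) := by
    rw [hasDerivAt_pi]
    intro k
    have h2 : ∀ j ∈ (Finset.univ : Finset (Fin n)),
        HasDerivAt (fun t : ℝ => W k j * σ (Function.update a i t j))
          (if j = i then W k i * deriv σ (a i) else 0) (a i) := by
      intro j _
      by_cases hj : j = i
      · subst hj
        simpa using (hσ (a j)).hasDerivAt.const_mul (W k j)
      · simpa [hj] using hasDerivAt_const (a i) (W k j * σ (a j))
    have h3 := HasDerivAt.fun_sum h2
    simpa [Matrix.mulVec, dotProduct] using h3
  have h4 : HasFDerivAt f (fderiv ℝ f (W.mulVec (fun i' => σ (a i'))))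
      (W.mulVec (fun i' => σ (Function.update a i (a i) i'))) := by
    rw [Function.update_eq_self]
    exact (hf _).hasFDerivAt
  have h5 := (h4.comp_hasDerivAt (a i) h1).deriv
  refine Eq.trans h5 ?_
  refine Eq.trans (LinearMap.pi_apply_eq_sum_univ
    (fderiv ℝ f (W.mulVec (fun i' => σ (a i')))).toLinearMap _) ?_
  refine Finset.sum_congr rfl fun k _ => ?_
  have h6 : (fun j : Fin m => if k = j then (1 : ℝ) else 0) = Pi.single k 1 := by
    ext j
    simp [Pi.single_apply, eq_comm]
  rw [h6]
  simp only [smul_eq_mul, ContinuousLinearMap.coe_coe]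
  ring
end

section
/- Let f : (Fin m → ℝ) → ℝ be differentiable, h : Fin n → ℝ, W : Matrix (Fin m) (Fin n) ℝ, i : Fin m, j : Fin n. Then deriv (fun t => f ((W.updateRow i (Function.update (W i) j t)).mulVec h)) (W i j) = ((fderiv ℝ f (W.mulVec h)) (Pi.single i 1)) * (h j). -/
theorem backprop_weight_gradient (m n : ℕ) (f : (Fin m → ℝ) → ℝ) (hf : Differentiable ℝ f)
    (h : Fin n → ℝ) (W : Matrix (Fin m) (Fin n) ℝ) (i : Fin m) (j : Fin n) :
    deriv (fun t : ℝ => f ((W.updateRow i (Function.update (W i) j t)).mulVec h)) (W i j) =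
      ((fderiv ℝ f (W.mulVec h)) (Pi.single i 1)) * (h j) := by
  have key : ∀ t : ℝ, (W.updateRow i (Function.update (W i) j t)).mulVec h =
      W.mulVec h + ((t - W i j) * h j) • (Pi.single i 1 : Fin m → ℝ) := by
    intro t
    have hu : Function.update (W i) j t = W i + Pi.single j (t - W i j) := by
      ext x
      by_cases hx : x = j
      · subst hx; simp
      · simp [hx]
    ext k
    by_cases hk : k = i
    · subst hk
      simp only [Matrix.mulVec, Matrix.updateRow_self, hu,
        Pi.add_apply, Pi.smul_apply, Pi.single_eq_same, smul_eq_mul, mul_one]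
      have e := add_dotProduct (W k) (Pi.single j (t - W k j)) h
      rw [single_dotProduct] at e
      exact e
    · simp [Matrix.mulVec, hk]
  simp only [key]
  have h1 : HasDerivAt (fun t : ℝ => W.mulVec h + ((t - W i j) * h j) •
      (Pi.single i 1 : Fin m → ℝ)) ((1 * h j) • (Pi.single i 1 : Fin m → ℝ)) (W i j) :=
    ((((hasDerivAt_id (W i j)).sub_const (W i j)).mul_const (h j)).smul_const _).const_add _
  have h2 : HasFDerivAt f (fderiv ℝ f (W.mulVec h))
      (W.mulVec h + ((W i j - W i j) * h j) • (Pi.single i 1 : Fin m → ℝ)) := by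
    simpa using (hf (W.mulVec h)).hasFDerivAt
  have h3 := (h2.comp_hasDerivAt (W i j) h1).deriv
  simp only [Function.comp_def] at h3
  rw [h3, map_smul, smul_eq_mul]
  ring
end

section
/- Let f : (Fin m → ℝ) → ℝ be twice continuously differentiable, σ : ℝ → ℝ be twice continuously differentiable, and W : Matrix (Fin m) (Fin n) ℝ. Suppose the off-diagonal second derivatives of f vanish everywhere: for all x : Fin m → ℝ and all k k' : Fin m with k ≠ k', (fderiv ℝ (fun y => (fderiv ℝ f y) (Pi.single k' 1)) x) (Pi.single k 1) = 0. Define g : (Fin n → ℝ) → ℝ by g a = f (W.mulVec (fun i' => σ (a i'))). Then for every a : Fin n → ℝ and i : Fin n, writing z = W.mulVec (fun i' => σ (a i')), deriv (deriv (fun t => g (Function.update a i t))) (a i) = ∑ k : Fin m, ( ((fderiv ℝ (fun y => (fderiv ℝ f y) (Pi.single k 1)) z) (Pi.single k 1)) * (W k i)^2 * (deriv σ (a i))^2 + ((fderiv ℝ f z) (Pi.single k 1)) * (W k i) * (deriv (deriv σ) (a i)) ). -/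
theorem hesscale_diagonal_recursion (m n : ℕ) (f : (Fin m → ℝ) → ℝ) (σ : ℝ → ℝ)
    (hf : ContDiff ℝ 2 f) (hσ : ContDiff ℝ 2 σ)
    (hoff : ∀ (x : Fin m → ℝ) (k k' : Fin m), k ≠ k' →
      (fderiv ℝ (fun y => (fderiv ℝ f y) (Pi.single k' 1)) x) (Pi.single k 1) = 0)
    (W : Matrix (Fin m) (Fin n) ℝ) :
    ∀ (a : Fin n → ℝ) (i : Fin n),
      deriv (deriv (fun t : ℝ => f (W.mulVec (fun i' => σ (Function.update a i t i'))))) (a i) =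
        ∑ k : Fin m,
          (((fderiv ℝ (fun y => (fderiv ℝ f y) (Pi.single k 1))
              (W.mulVec (fun i' => σ (a i')))) (Pi.single k 1))
            * (W k i)^2 * (deriv σ (a i))^2
          + ((fderiv ℝ f (W.mulVec (fun i' => σ (a i')))) (Pi.single k 1))
            * (W k i) * (deriv (deriv σ) (a i))) := by
  intro a i
  have hexp : ∀ (L : (Fin m → ℝ) →L[ℝ] ℝ) (v : Fin m → ℝ),
      L v = ∑ k, v k * L (Pi.single k 1) := by
    intro L v
    have h := LinearMap.pi_apply_eq_sum_univ (L : (Fin m → ℝ) →ₗ[ℝ] ℝ) v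
    simp only [ContinuousLinearMap.coe_coe, smul_eq_mul] at h
    rw [h]
    refine Finset.sum_congr rfl fun k _ => ?_
    congr 2
    ext j
    simp [Pi.single_apply, eq_comm]
  have hσd : Differentiable ℝ σ := hσ.differentiable (by norm_num)
  have hσ2 : Differentiable ℝ (deriv σ) := by
    have h : ContDiff ℝ (1 + 1) σ := by
      convert hσ using 1
      norm_num
    exact (contDiff_succ_iff_deriv.1 h).2.2.differentiable (by norm_num)
  have hfd : Differentiable ℝ f := hf.differentiable (by norm_num)
  have hf2 : Differentiable ℝ (fderiv ℝ f) :=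
    (hf.fderiv_right (m := 1) (by norm_num)).differentiable (by norm_num)
  have hD : ∀ k : Fin m, Differentiable ℝ (fun y => (fderiv ℝ f y) (Pi.single k 1)) :=
    fun k => hf2.clm_apply (differentiable_const _)
  have hφ : ∀ t : ℝ, HasDerivAt
      (fun t : ℝ => W.mulVec (fun i' => σ (Function.update a i t i')))
      (fun k => W k i * deriv σ t) t := by
    intro t
    rw [hasDerivAt_pi]
    intro k
    have h : ∀ i' ∈ Finset.univ, HasDerivAt
        (fun t : ℝ => W k i' * σ (Function.update a i t i'))
        (if i' = i then W k i * deriv σ t else 0) t := by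
      intro i' _
      by_cases hi : i' = i
      · subst hi
        simpa using (hσd t).hasDerivAt.const_mul (W k i')
      · simpa [hi] using hasDerivAt_const t (W k i' * σ (a i'))
    have h2 := HasDerivAt.fun_sum h
    simpa [Matrix.mulVec, dotProduct] using h2
  have h1 : deriv (fun t : ℝ => f (W.mulVec (fun i' => σ (Function.update a i t i')))) =
      fun t => ∑ k, (W k i * deriv σ t) *
        (fderiv ℝ f (W.mulVec (fun i' => σ (Function.update a i t i')))) (Pi.single k 1) := by
    funext t
    have h := ((hfd _).hasFDerivAt.comp_hasDerivAt t (hφ t)).deriv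
    rw [hexp] at h
    exact h
  rw [h1]
  have h2 : ∀ k ∈ Finset.univ, HasDerivAt (fun t => (W k i * deriv σ t) *
        (fderiv ℝ f (W.mulVec (fun i' => σ (Function.update a i t i')))) (Pi.single k 1)) _ (a i) :=
    fun k _ => ((hσ2 (a i)).hasDerivAt.const_mul (W k i)).mul
      ((hD k _).hasFDerivAt.comp_hasDerivAt (a i) (hφ (a i)))
  rw [(HasDerivAt.fun_sum h2).deriv]
  refine Finset.sum_congr rfl fun k _ => ?_
  rw [hexp _ (fun k => W k i * deriv σ (a i)), Finset.sum_eq_single k]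
  · simp only [Function.update_eq_self]
    ring
  · intro j _ hj
    rw [hoff _ j k hj, mul_zero]
  · simp
end

section
/- Let L : (Fin n → ℝ) → ℝ be three times continuously differentiable with iteratedFDeriv ℝ 3 L identically zero, and suppose the off-diagonal second derivatives of L vanish everywhere: for all x : Fin n → ℝ and all i i' : Fin n with i ≠ i', (fderiv ℝ (fun y => (fderiv ℝ L y) (Pi.single i' 1)) x) (Pi.single i 1) = 0. Then for every finite set S : Finset (Fin n) and every x : Fin n → ℝ, L (fun i => if i ∈ S then 0 else x i) - L x = ∑ i ∈ S, ( -((fderiv ℝ L x) (Pi.single i 1)) * (x i) + (1/2) * ((fderiv ℝ (fun y => (fderiv ℝ L y) (Pi.single i 1)) x) (Pi.single i 1)) * (x i)^2 ). -/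
theorem second_fderiv_const {E : Type*} [NormedAddCommGroup E] [NormedSpace ℝ E] {L : E → ℝ}
    (hDd : Differentiable ℝ (fderiv ℝ (fderiv ℝ L)))
    (h3 : ∀ x, iteratedFDeriv ℝ 3 L x = 0) (x y : E) :
    fderiv ℝ (fderiv ℝ L) x = fderiv ℝ (fderiv ℝ L) y := by
  refine is_const_of_fderiv_eq_zero (𝕜 := ℝ) hDd (fun y => ?_) x y
  rw [← norm_eq_zero, ← norm_iteratedFDeriv_one, norm_iteratedFDeriv_fderiv,
    norm_iteratedFDeriv_fderiv, h3 y, norm_zero]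

theorem group_utility_additive (n : ℕ) (L : (Fin n → ℝ) → ℝ)
    (hL : ContDiff ℝ 3 L)
    (h3 : ∀ x : Fin n → ℝ, iteratedFDeriv ℝ 3 L x = 0)
    (hoff : ∀ (x : Fin n → ℝ) (i i' : Fin n), i ≠ i' →
      (fderiv ℝ (fun y => (fderiv ℝ L y) (Pi.single i' 1)) x) (Pi.single i 1) = 0) :
    ∀ (S : Finset (Fin n)) (x : Fin n → ℝ),
      L (fun i => if i ∈ S then 0 else x i) - L x =
        ∑ i ∈ S, (-((fderiv ℝ L x) (Pi.single i 1)) * (x i)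
          + (1/2) * ((fderiv ℝ (fun y => (fderiv ℝ L y) (Pi.single i 1)) x)
              (Pi.single i 1)) * (x i)^2) := by
  intro S x
  have hLd : Differentiable ℝ L := hL.differentiable (by norm_num)
  have hF : ContDiff ℝ 2 (fderiv ℝ L) := hL.fderiv_right (by norm_num)
  have hFd : Differentiable ℝ (fderiv ℝ L) := hF.differentiable (by norm_num)
  have hD : ContDiff ℝ 1 (fderiv ℝ (fderiv ℝ L)) := hF.fderiv_right (by norm_num)
  have hDd : Differentiable ℝ (fderiv ℝ (fderiv ℝ L)) := hD.differentiable (by norm_num)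
  set B := fderiv ℝ (fderiv ℝ L) x with hB
  have hDc : ∀ y, fderiv ℝ (fderiv ℝ L) y = B := fun y =>
    second_fderiv_const hDd h3 y x
  have hsec : ∀ y v w, fderiv ℝ (fun y => (fderiv ℝ L y) v) y w = B w v := by
    intro y v w
    have h := ((hFd y).hasFDerivAt.clm_apply (hasFDerivAt_const v y)).fderiv
    rw [h, hDc]
    simp
  have hFx : ∀ h, fderiv ℝ L (x + h) = fderiv ℝ L x + B h := by
    intro h
    have := is_const_of_fderiv_eq_zero (𝕜 := ℝ) (f := fun y => fderiv ℝ L y - B y)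
      (hFd.sub B.differentiable) (by
        intro y
        rw [fderiv_fun_sub (hFd y) B.differentiableAt, hDc, B.fderiv, sub_self]) (x + h) x
    simp only [map_add] at this
    rw [sub_eq_sub_iff_add_eq_add] at this
    have h2 : fderiv ℝ L (x + h) + B x = (fderiv ℝ L x + B h) + B x := by
      rw [this]; abel
    exact add_right_cancel h2
  have key : ∀ v, L (x + v) - L x = fderiv ℝ L x v + 1/2 * B v v := by
    intro v
    have hd : ∀ t : ℝ, HasDerivAt
        (fun t : ℝ => L (x + t • v) - (t * fderiv ℝ L x v + t^2 * (1/2 * B v v))) 0 t := by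
      intro t
      have h1 : HasDerivAt (fun t : ℝ => x + t • v) v t := by
        simpa using ((hasDerivAt_id t).smul_const v).const_add x
      have h2 := (hLd (x + t • v)).hasFDerivAt.comp_hasDerivAt t h1
      have h3 := ((hasDerivAt_id t).mul_const (fderiv ℝ L x v)).add
        ((hasDerivAt_pow 2 t).mul_const (1/2 * B v v))
      refine (h2.sub h3).congr_deriv ?_
      rw [hFx]
      simp
      ring
    have := is_const_of_deriv_eq_zero (fun t => (hd t).differentiableAt)
      (fun t => (hd t).deriv) 1 0
    simp at this
    linarith
  have hv : (fun i => if i ∈ S then 0 else x i)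
      = x + ∑ i ∈ S, (-(x i)) • (Pi.single i (1:ℝ) : Fin n → ℝ) := by
    ext j
    simp [Finset.sum_apply, Pi.single_apply]
    split_ifs <;> simp
  have hoff' : ∀ i j, i ≠ j → B (Pi.single i 1) (Pi.single j 1) = 0 := by
    intro i j hij
    rw [← hsec x]; exact hoff x i j hij
  rw [hv, key]
  simp only [hsec, map_sum, map_smul, ContinuousLinearMap.sum_apply, ContinuousLinearMap.smul_apply,
    smul_eq_mul]
  rw [Finset.sum_add_distrib, Finset.mul_sum]
  congr 1
  · exact Finset.sum_congr rfl fun i _ => by ring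
  · refine Finset.sum_congr rfl fun i hi => ?_
    rw [Finset.sum_eq_single i]
    · ring
    · intro j _ hj
      first
        | rw [hoff' j i hj]; ring
        | rw [hoff' i j hj.symm]; ring
    · exact fun h => absurd hi h
end

section
/- Let F : (Fin q → ℝ) → ℝ be twice continuously differentiable, σ : ℝ → ℝ be twice continuously differentiable, V : Matrix (Fin q) (Fin p) ℝ, W : Matrix (Fin p) (Fin n) ℝ, h : Fin n → ℝ, i : Fin p, j : Fin n. Suppose the off-diagonal second derivatives of F vanish everywhere: for all x : Fin q → ℝ and all distinct k k' : Fin q, (fderiv ℝ (fun y => (fderiv ℝ F y) (Pi.single k' 1)) x) (Pi.single k 1) = 0. Writing a = W.mulVec h and z = V.mulVec (fun i' => σ (a i')), then deriv (deriv (fun t => F (V.mulVec (fun i' => σ (((W.updateRow i (Function.update (W i) j t)).mulVec h) i'))))) (W i j) = (∑ k : Fin q, ( ((fderiv ℝ (fun y => (fderiv ℝ F y) (Pi.single k 1)) z) (Pi.single k 1)) * (V k i)^2 * (deriv σ (a i))^2 + ((fderiv ℝ F z) (Pi.single k 1)) * (V k i) * (deriv (deriv σ) (a i)) )) * (h j)^2.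 -/
theorem two_layer_weight_second_derivative (q p n : ℕ) (F : (Fin q → ℝ) → ℝ) (σ : ℝ → ℝ)
    (hF : ContDiff ℝ 2 F) (hσ : ContDiff ℝ 2 σ)
    (V : Matrix (Fin q) (Fin p) ℝ) (W : Matrix (Fin p) (Fin n) ℝ)
    (h : Fin n → ℝ) (i : Fin p) (j : Fin n)
    (hoff : ∀ (x : Fin q → ℝ) (k k' : Fin q), k ≠ k' →
      (fderiv ℝ (fun y => (fderiv ℝ F y) (Pi.single k' 1)) x) (Pi.single k 1) = 0) :
    deriv (deriv (fun t : ℝ =>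
        F (V.mulVec (fun i' => σ (((W.updateRow i (Function.update (W i) j t)).mulVec h) i')))))
        (W i j) =
      (∑ k : Fin q,
        (((fderiv ℝ (fun y => (fderiv ℝ F y) (Pi.single k 1))
            (V.mulVec (fun i' => σ ((W.mulVec h) i')))) (Pi.single k 1))
          * (V k i)^2 * (deriv σ ((W.mulVec h) i))^2
        + ((fderiv ℝ F (V.mulVec (fun i' => σ ((W.mulVec h) i')))) (Pi.single k 1))
          * (V k i) * (deriv (deriv σ) ((W.mulVec h) i))))
        * (h j)^2 := by
  set a := W.mulVec h with ha
  set z := V.mulVec (fun i' => σ (a i')) with hz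
  set v : Fin q → ℝ := fun k => V k i with hv
  have hpath : ∀ t : ℝ, V.mulVec (fun i' =>
      σ (((W.updateRow i (Function.update (W i) j t)).mulVec h) i'))
      = z + (σ (a i + (t - W i j) * h j) - σ (a i)) • v := by
    intro t
    have hact : (fun i' => σ (((W.updateRow i (Function.update (W i) j t)).mulVec h) i'))
        = (fun i' => σ (a i')) + Pi.single i (σ (a i + (t - W i j) * h j) - σ (a i)) := by
      funext i'
      by_cases hi : i' = i
      · subst hi
        have : ((W.updateRow i' (Function.update (W i') j t)).mulVec h) i'
            = a i' + (t - W i' j) * h j := by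
          have hu : Function.update (W i') j t = W i' + Pi.single j (t - W i' j) := by
            funext l
            by_cases hl : l = j
            · subst hl; simp
            · simp [hl]
          rw [ha]
          simp only [Matrix.mulVec, Matrix.updateRow_self]
          rw [hu, add_dotProduct, single_dotProduct]
        rw [this]; simp
      · simp [hi, Matrix.mulVec, ha]
    rw [hact, Matrix.mulVec_add, hz]
    congr 1
    funext k
    simp [hv, Matrix.mulVec_single, mul_comm]
  simp_rw [hpath]
  have hlin : ∀ L : (Fin q → ℝ) →L[ℝ] ℝ, ∀ w : Fin q → ℝ,
      L w = ∑ k, w k * L (Pi.single k 1) := by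
    intro L w
    have hw : w = ∑ k, w k • (Pi.single k 1 : Fin q → ℝ) := by
      funext l
      simp [Finset.sum_apply, Pi.single_apply]
    conv_lhs => rw [hw]
    simp only [map_sum, map_smul, smul_eq_mul]
  have hσ1 : Differentiable ℝ σ := hσ.differentiable (by norm_num)
  have hσ2 : Differentiable ℝ (deriv σ) :=
    ((contDiff_succ_iff_deriv (n := 1)).1 hσ).2.2.differentiable (by norm_num)
  have hF1 : Differentiable ℝ F := hF.differentiable (by norm_num)
  have hF2 : ∀ w, Differentiable ℝ (fun y => fderiv ℝ F y w) := fun w =>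
    ((hF.fderiv_right (m := 1) (by norm_num)).clm_apply contDiff_const).differentiable
      (by norm_num)
  have hu : ∀ t : ℝ, HasDerivAt (fun t : ℝ => a i + (t - W i j) * h j) (h j) t := by
    intro t
    simpa using (((hasDerivAt_id t).sub_const (W i j)).mul_const (h j)).const_add (a i)
  have hpd : ∀ t : ℝ, HasDerivAt
      (fun t : ℝ => z + (σ (a i + (t - W i j) * h j) - σ (a i)) • v)
      ((deriv σ (a i + (t - W i j) * h j) * h j) • v) t := by
    intro t
    exact ((((hσ1 _).hasDerivAt.comp t (hu t)).sub_const _).smul_const v).const_add z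
  have hd1 : deriv (fun t : ℝ => F (z + (σ (a i + (t - W i j) * h j) - σ (a i)) • v))
      = fun t => ∑ k, v k * (fderiv ℝ F (z + (σ (a i + (t - W i j) * h j) - σ (a i)) • v)
          (Pi.single k 1) * (deriv σ (a i + (t - W i j) * h j) * h j)) := by
    funext t
    have := ((hF1 _).hasFDerivAt.comp_hasDerivAt t (hpd t)).deriv
    refine this.trans ?_
    rw [hlin]
    refine Finset.sum_congr rfl fun k _ => ?_
    simp only [Pi.smul_apply, smul_eq_mul]
    ring
  rw [hd1]
  have hd2 := HasDerivAt.fun_sum (u := Finset.univ) fun (k : Fin q) _ =>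
    (((((hF2 (Pi.single k 1)) _).hasFDerivAt.comp_hasDerivAt (W i j) (hpd (W i j))).mul
      (((hσ2 _).hasDerivAt.comp (W i j) (hu (W i j))).mul_const (h j))).const_mul (v k))
  refine hd2.deriv.trans ?_
  rw [Finset.sum_mul]
  refine Finset.sum_congr rfl fun k _ => ?_
  have hk : ∀ x, fderiv ℝ (fun y => fderiv ℝ F y (Pi.single k 1)) x v
      = v k * fderiv ℝ (fun y => fderiv ℝ F y (Pi.single k 1)) x (Pi.single k 1) := by
    intro x
    rw [hlin]
    refine Finset.sum_eq_single k (fun l _ hl => ?_) (by simp)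
    rw [hoff x l k hl, mul_zero]
  simp only [Function.comp_apply, map_smul, hk, sub_self, zero_mul, add_zero, zero_smul, smul_eq_mul]
  simp only [hv]
  ring
end

section
/- Let f : (Fin m → ℝ) → ℝ, σ : ℝ → ℝ with σ 0 = 0, W : Matrix (Fin m) (Fin n) ℝ, a : Fin n → ℝ, and j : Fin n. Define g : (Fin n → ℝ) → ℝ by g a' = f (W.mulVec (fun i => σ (a' i))) and the slice φ : ℝ → ℝ by φ t = g (Function.update a j t). If φ is three times continuously differentiable with iteratedDeriv 3 φ identically zero, then f (W.mulVec (Function.update (fun i => σ (a i)) j 0)) - g a = -(deriv φ (a j)) * (a j) + (1/2) * (deriv (deriv φ) (a j)) * (a j)^2. -/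
theorem quad_aux (φ : ℝ → ℝ) (hφ : ContDiff ℝ 3 φ) (h3 : ∀ t, iteratedDeriv 3 φ t = 0) (x : ℝ) :
    φ 0 - φ x = -(deriv φ x) * x + (1/2) * (deriv (deriv φ) x) * x^2 := by
  have d0 : Differentiable ℝ φ := hφ.differentiable (by norm_num)
  have d1 : Differentiable ℝ (deriv φ) := by
    have := hφ.differentiable_iteratedDeriv 1 (by norm_num)
    simpa [iteratedDeriv_succ, iteratedDeriv_zero] using this
  have d2 : Differentiable ℝ (deriv (deriv φ)) := by
    have := hφ.differentiable_iteratedDeriv 2 (by norm_num)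
    simpa [iteratedDeriv_succ, iteratedDeriv_zero] using this
  have h3' : ∀ t, deriv (deriv (deriv φ)) t = 0 := by
    intro t
    have := h3 t
    simpa [iteratedDeriv_succ, iteratedDeriv_zero] using this
  have key : ∀ t, HasDerivAt
      (fun t => φ t - deriv φ t * t + (1/2) * (deriv (deriv φ) t * t^2)) 0 t := by
    intro t
    have e2 := (d2 t).hasDerivAt
    rw [h3' t] at e2
    have := ((d0 t).hasDerivAt.sub ((d1 t).hasDerivAt.mul (hasDerivAt_id t))).add
      ((e2.mul (hasDerivAt_pow 2 t)).const_mul (1/2))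
    refine HasDerivAt.congr_deriv (f := fun t => φ t - deriv φ t * t
      + (1/2) * (deriv (deriv φ) t * t^2)) this ?_
    simp only [id]
    push_cast
    ring
  have := is_const_of_deriv_eq_zero (fun t => (key t).differentiableAt)
    (fun t => (key t).deriv) 0 x
  linarith

theorem origin_passing_feature_utility (m n : ℕ) (f : (Fin m → ℝ) → ℝ) (σ : ℝ → ℝ)
    (hσ : σ 0 = 0) (W : Matrix (Fin m) (Fin n) ℝ) (a : Fin n → ℝ) (j : Fin n)
    (hφ : ContDiff ℝ 3
      (fun t : ℝ => f (W.mulVec (fun i => σ (Function.update a j t i)))))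
    (h3 : ∀ t : ℝ, iteratedDeriv 3
      (fun t : ℝ => f (W.mulVec (fun i => σ (Function.update a j t i)))) t = 0) :
    f (W.mulVec (Function.update (fun i => σ (a i)) j 0))
        - f (W.mulVec (fun i => σ (a i))) =
      -(deriv (fun t : ℝ => f (W.mulVec (fun i => σ (Function.update a j t i)))) (a j)) * (a j)
        + (1/2) * (deriv (deriv
            (fun t : ℝ => f (W.mulVec (fun i => σ (Function.update a j t i))))) (a j))
          * (a j)^2 := by
  have h := quad_aux _ hφ h3 (a j)
  have e : (fun i => σ (Function.update a j 0 i)) = Function.update (fun i => σ (a i)) j 0 := by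
    funext i
    by_cases hi : i = j
    · subst hi; simp [hσ]
    · simp [hi]
  simp only [Function.update_eq_self] at h
  rw [e] at h
  exact h
end
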